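/- Let u : ℝ → ℝ → ℝ be a smooth function of (x,t) with u_x(x,t) ≠ 0 for all (x,t), satisfying the Schwarzian Korteweg-de Vries equation u_t = u_{xxx} - (3/2)·u_{xx}²/u_x. Then the conservation law ∂_t(1/u_x) + ∂_x(u_{xxx}/u_x² - (1/2)·u_{xx}²/u_x³) = 0 holds for all (x,t). -/

import Mathlib

/-!
Differentiating the equation in `x` gives, with `a = u_x`, `b = u_xx`, `c = u_xxx`, `d = u_xxxx`,
`u_tx = d - 3 b c / a + (3/2) b³ / a²`. Since `u` is smooth, mixed partials commute
(`dt_dx_comm`), so `∂_t (1 / u_x) = - u_tx / a²`, and this is exactly minus the `x`-derivative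
`d / a² - 3 b c / a³ + (3/2) b³ / a⁴` of the flux.
-/

/-- Total `x`-derivative of a function of `(x, t)`. -/
noncomputable def dx (f : ℝ → ℝ → ℝ) : ℝ → ℝ → ℝ := fun x t => deriv (fun y => f y t) x

/-- Total `t`-derivative of a function of `(x, t)`. -/
noncomputable def dt (f : ℝ → ℝ → ℝ) : ℝ → ℝ → ℝ := fun x t => deriv (fun s => f x s) t

/-- The Schwarzian Korteweg-de Vries equation. -/
def SKdV (u : ℝ → ℝ → ℝ) : Prop :=
  ∀ x t, dt u x t =
    dx (dx (dx u)) x t - (3/2) * (dx (dx u) x t)^2 / dx u x t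

/-- Joint smoothness of a curried function of `(x, t)`. -/
def JointlySmooth (f : ℝ → ℝ → ℝ) : Prop :=
  ContDiff ℝ (⊤ : ℕ∞) (fun p : ℝ × ℝ => f p.1 p.2)

namespace JointlySmooth

variable {f : ℝ → ℝ → ℝ}

theorem differentiable (hf : JointlySmooth f) :
    Differentiable ℝ (fun p : ℝ × ℝ => f p.1 p.2) :=
  ContDiff.differentiable hf (by simp)

theorem hasDerivAt_fst (hf : JointlySmooth f) (x t : ℝ) :
    HasDerivAt (fun y => f y t) (fderiv ℝ (fun p : ℝ × ℝ => f p.1 p.2) (x, t) (1, 0)) x :=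
  HasFDerivAt.comp_hasDerivAt (f := fun y : ℝ => (y, t)) x (hf.differentiable (x, t)).hasFDerivAt
    ((hasDerivAt_id x).prodMk (hasDerivAt_const x t))

theorem hasDerivAt_snd (hf : JointlySmooth f) (x t : ℝ) :
    HasDerivAt (fun s => f x s) (fderiv ℝ (fun p : ℝ × ℝ => f p.1 p.2) (x, t) (0, 1)) t :=
  HasFDerivAt.comp_hasDerivAt (f := fun s : ℝ => (x, s)) t (hf.differentiable (x, t)).hasFDerivAt
    ((hasDerivAt_const t x).prodMk (hasDerivAt_id t))

theorem dx_eq (hf : JointlySmooth f) (x t : ℝ) :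
    dx f x t = fderiv ℝ (fun p : ℝ × ℝ => f p.1 p.2) (x, t) (1, 0) :=
  (hf.hasDerivAt_fst x t).deriv

theorem dt_eq (hf : JointlySmooth f) (x t : ℝ) :
    dt f x t = fderiv ℝ (fun p : ℝ × ℝ => f p.1 p.2) (x, t) (0, 1) :=
  (hf.hasDerivAt_snd x t).deriv

theorem hasDerivAt_dx (hf : JointlySmooth f) (x t : ℝ) :
    HasDerivAt (fun y => f y t) (dx f x t) x :=
  (hf.hasDerivAt_fst x t).differentiableAt.hasDerivAt

theorem hasDerivAt_dt (hf : JointlySmooth f) (x t : ℝ) :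
    HasDerivAt (fun s => f x s) (dt f x t) t :=
  (hf.hasDerivAt_snd x t).differentiableAt.hasDerivAt

theorem contDiff_fderiv (hf : JointlySmooth f) :
    ContDiff ℝ (⊤ : ℕ∞) (fderiv ℝ (fun p : ℝ × ℝ => f p.1 p.2)) :=
  ContDiff.fderiv_right hf (by simp)

theorem smooth_dx (hf : JointlySmooth f) : JointlySmooth (dx f) := by
  have h : ContDiff ℝ (⊤ : ℕ∞) (fun p => fderiv ℝ (fun p : ℝ × ℝ => f p.1 p.2) p (1, 0)) :=
    hf.contDiff_fderiv.clm_apply contDiff_const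
  have he : (fun p : ℝ × ℝ => dx f p.1 p.2) =
      fun p => fderiv ℝ (fun p : ℝ × ℝ => f p.1 p.2) p (1, 0) :=
    funext fun p => hf.dx_eq p.1 p.2
  rw [JointlySmooth, he]
  exact h

/-- Mixed partials of a smooth function commute: both are values of the second Fréchet
derivative, which is symmetric. -/
theorem dt_dx_comm (hf : JointlySmooth f) (x t : ℝ) :
    dt (dx f) x t = dx (dt f) x t := by
  have hD : HasFDerivAt (fderiv ℝ (fun p : ℝ × ℝ => f p.1 p.2))
      (fderiv ℝ (fderiv ℝ (fun p : ℝ × ℝ => f p.1 p.2)) (x, t)) (x, t) :=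
    (hf.contDiff_fderiv.differentiable (by simp) (x, t)).hasFDerivAt
  have h1 : HasDerivAt (fun s => dx f x s)
      (fderiv ℝ (fderiv ℝ (fun p : ℝ × ℝ => f p.1 p.2)) (x, t) (0, 1) (1, 0)) t := by
    have h := (hD.comp_hasDerivAt (f := fun s : ℝ => (x, s)) t
      ((hasDerivAt_const t x).prodMk (hasDerivAt_id t))).clm_apply
      (hasDerivAt_const t ((1, 0) : ℝ × ℝ))
    simpa [hf.dx_eq] using h
  have h2 : HasDerivAt (fun y => dt f y t)
      (fderiv ℝ (fderiv ℝ (fun p : ℝ × ℝ => f p.1 p.2)) (x, t) (1, 0) (0, 1)) x := by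
    have h := (hD.comp_hasDerivAt (f := fun y : ℝ => (y, t)) x
      ((hasDerivAt_id x).prodMk (hasDerivAt_const x t))).clm_apply
      (hasDerivAt_const x ((0, 1) : ℝ × ℝ))
    simpa [hf.dt_eq] using h
  have hsymm : IsSymmSndFDerivAt ℝ (fun p : ℝ × ℝ => f p.1 p.2) (x, t) :=
    (ContDiff.contDiffAt hf).isSymmSndFDerivAt (by
      rw [minSmoothness_of_isRCLikeNormedField]
      exact WithTop.coe_le_coe.2 (le_top : (2 : ℕ∞) ≤ ⊤))
  exact h1.deriv.trans ((hsymm.eq _ _).trans h2.deriv.symm)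

end JointlySmooth

/-- The conservation law `∂_t(1/u_x) + ∂_x(u_xxx/u_x² - u_xx²/(2u_x³)) = 0` for the
Schwarzian Korteweg-de Vries equation. -/
theorem skdv_conservation_law
    (u : ℝ → ℝ → ℝ)
    (hu : ContDiff ℝ (⊤ : ℕ∞) (fun p : ℝ × ℝ => u p.1 p.2))
    (hux : ∀ x t, dx u x t ≠ 0)
    (heq : SKdV u) :
    ∀ x t,
      dt (fun x t => 1 / dx u x t) x t +
      dx (fun x t => dx (dx (dx u)) x t / (dx u x t)^2
        - (1/2) * (dx (dx u) x t)^2 / (dx u x t)^3) x t = 0 := by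
  intro x t
  have h0 : JointlySmooth u := hu
  have ha := h0.smooth_dx.hasDerivAt_dx x t
  have hb := h0.smooth_dx.smooth_dx.hasDerivAt_dx x t
  have hc := h0.smooth_dx.smooth_dx.smooth_dx.hasDerivAt_dx x t
  have hne := hux x t
  have hfun : dt u = fun x t =>
      dx (dx (dx u)) x t - (3/2) * (dx (dx u) x t)^2 / dx u x t := by
    funext y s
    exact heq y s
  have hutx : dx (fun x t =>
      dx (dx (dx u)) x t - (3/2) * (dx (dx u) x t)^2 / dx u x t) x t = _ :=
    (hc.sub (((hb.pow 2).const_mul (3/2)).div ha hne)).deriv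
  have hdens : dt (fun x t => 1 / dx u x t) x t = _ :=
    ((hasDerivAt_const t (1 : ℝ)).div (h0.smooth_dx.hasDerivAt_dt x t) hne).deriv
  have hflux : dx (fun x t => dx (dx (dx u)) x t / (dx u x t)^2
      - (1/2) * (dx (dx u) x t)^2 / (dx u x t)^3) x t = _ :=
    ((hc.div (ha.pow 2) (pow_ne_zero 2 hne)).sub
      (((hb.pow 2).const_mul (1/2)).div (ha.pow 3) (pow_ne_zero 3 hne))).deriv
  rw [hdens, hflux, h0.dt_dx_comm, hfun, hutx]
  simp only [Pi.pow_apply]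
  field_simp
  ring
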